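/- arXiv:1409.5689 — 2 statements merged into one kernel-verified Lean document; each statement's English description precedes it below -/
import Mathlib

section
/- Let A be the generator of a holomorphic semigroup T on a complex Banach space X. Then the following are equivalent: (i) T is exponentially stable; (ii) Re λ < 0 for every λ ∈ σ(A). -/
open MeasureTheory Set

variable {X : Type*} [NormedAddCommGroup X] [NormedSpace ℂ X] [CompleteSpace X]

/-- `R` is the resolvent operator `R(l, A) = (l - A)⁻¹` of the (unbounded) operator `A`. -/
def IsResolventOf (A : X →ₗ.[ℂ] X) (l : ℂ) (R : X →L[ℂ] X) : Prop :=
  (∀ x : X, ∃ hx : R x ∈ A.domain, l • R x - A ⟨R x, hx⟩ = x) ∧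
  (∀ y : A.domain, R (l • (y : X) - A y) = (y : X))

/-- `T` is a semigroup of type `(M, ω)`. -/
def IsSemigroupOfType (T : ℝ → X →L[ℂ] X) (M ω : ℝ) : Prop :=
  (∀ x : X, ContinuousOn (fun t => T t x) (Set.Ioi 0)) ∧
  (∀ s t : ℝ, 0 < s → 0 < t → T (s + t) = (T s).comp (T t)) ∧
  (0 < M ∧ ∀ t : ℝ, 0 < t → ‖T t‖ ≤ M * Real.exp (ω * t)) ∧
  (∀ x : X, (∀ t : ℝ, 0 < t → T t x = 0) → x = 0)

/-- `A` is the generator of the semigroup `T` of type `(M, ω)`. -/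
def IsGeneratorOf (A : X →ₗ.[ℂ] X) (T : ℝ → X →L[ℂ] X) (ω : ℝ) : Prop :=
  ∀ l : ℝ, ω < l → ∃ R : X →L[ℂ] X, IsResolventOf A (l : ℂ) R ∧
    ∀ x : X, R x = ∫ t in Set.Ioi (0 : ℝ), Real.exp (-l * t) • T t x

/-- `A` generates the semigroup `T` (of some type `(M, ω)`). -/
def Generates (A : X →ₗ.[ℂ] X) (T : ℝ → X →L[ℂ] X) : Prop :=
  ∃ M ω : ℝ, IsSemigroupOfType T M ω ∧ IsGeneratorOf A T ω

/-- The open sector `Σ_θ = {r e^{iφ} : r > 0, |φ| < θ}`. -/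
def Sector (θ : ℝ) : Set ℂ := {z : ℂ | z ≠ 0 ∧ |Complex.arg z| < θ}

/-- The semigroup `T` is holomorphic: it extends to a holomorphic function on a sector
`Σ_θ` (for some `0 < θ ≤ π/2`) which is bounded on `Σ_θ ∩ {|z| ≤ 1}`. -/
def IsHolomorphicSG (T : ℝ → X →L[ℂ] X) : Prop :=
  ∃ θ : ℝ, 0 < θ ∧ θ ≤ Real.pi / 2 ∧ ∃ S : ℂ → X →L[ℂ] X,
    DifferentiableOn ℂ S (Sector θ) ∧
    (∀ t : ℝ, 0 < t → S (t : ℂ) = T t) ∧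
    (∃ C : ℝ, ∀ z ∈ Sector θ, ‖z‖ ≤ 1 → ‖S z‖ ≤ C)

/-- The spectrum of the (unbounded) operator `A`: the complement of the resolvent set. -/
def spectrumOf (A : X →ₗ.[ℂ] X) : Set ℂ :=
  {l : ℂ | ¬ ∃ R : X →L[ℂ] X, IsResolventOf A l R}

/-!
A holomorphic semigroup is norm continuous on `(0, ∞)` and hence satisfies the spectral mapping
theorem `σ(T t) \ {0} = exp (t σ(A))`. To see this, pass to the bicommutant of the semigroup, a
commutative Banach algebra in which spectra are unchanged and consist of the values of characters.
A character `φ` turns `T` into a scalar semigroup `t ↦ φ (T t)`; by the Laplace transform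
`R(m, A) = ∫ exp (-m t) T t` it vanishes if `φ (R(m, A)) = 0`, and otherwise equals `t ↦ exp (λ t)`
with `φ (R(m, A)) = (m - λ)⁻¹`, that is, `λ ∈ σ(A)`.

Exponential stability means that some power of `T 1` has norm less than `1`, hence that the spectral
radius of `T 1` is less than `1`, and by spectral mapping that `|exp λ| < 1` on `σ(A)`.
-/

open Filter Topology

section Semigroup

/-- `T : ℝ → E` is a one-parameter semigroup on the half-line `(0, ∞)`; its values at `t ≤ 0` are
irrelevant. -/
def IsOneParameterSemigroup {E : Type*} [Mul E] (T : ℝ → E) : Prop :=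
  ∀ ⦃s t : ℝ⦄, 0 < s → 0 < t → T (s + t) = T s * T t

namespace IsOneParameterSemigroup

theorem commute {E : Type*} [Mul E] {T : ℝ → E} (hT : IsOneParameterSemigroup T) {s t : ℝ}
    (hs : 0 < s) (ht : 0 < t) : Commute (T s) (T t) := by
  rw [commute_iff_eq, ← hT hs ht, ← hT ht hs, add_comm]

theorem pow_succ {E : Type*} [Monoid E] {T : ℝ → E} (hT : IsOneParameterSemigroup T) {t : ℝ}
    (ht : 0 < t) (n : ℕ) : T t ^ (n + 1) = T ((n + 1) * t) := by
  induction n with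
  | zero => simp
  | succ n ih =>
    rw [_root_.pow_succ, ih, ← hT (by positivity) ht]
    push_cast
    ring_nf

theorem setIntegral_Ioi {E : Type*} [NormedRing E] [NormedAlgebra ℝ E] {T : ℝ → E}
    (hT : IsOneParameterSemigroup T) (hint : IntegrableOn T (Ioi 0)) {s : ℝ} (hs : 0 < s) :
    ∫ t in Ioi s, T t = T s * ∫ t in Ioi 0, T t :=
  calc ∫ t in Ioi s, T t = ∫ t in Ioi 0, T (s + t) := by
        rw [← (measurePreserving_add_left volume s).setIntegral_preimage_emb
          (measurableEmbedding_addLeft s) T (Ioi s), preimage_const_add_Ioi, sub_self]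
    _ = ∫ t in Ioi 0, T s * T t := setIntegral_congr_fun measurableSet_Ioi fun _ ht => hT hs ht
    _ = T s * ∫ t in Ioi 0, T t := integral_const_mul_of_integrable hint

end IsOneParameterSemigroup

/-- A norm-continuous one-parameter semigroup on `(0, ∞)` that is integrable. Its Laplace transform
at `0`, the integral over `(0, ∞)`, plays the role of the resolvent. -/
structure IsIntegrableSemigroup {E : Type*} [NormedRing E] (T : ℝ → E) : Prop where
  isOneParameterSemigroup : IsOneParameterSemigroup T
  continuousOn : ContinuousOn T (Ioi 0)
  integrableOn : IntegrableOn T (Ioi 0)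

theorem IsIntegrableSemigroup.map {𝕜 E F : Type*} [NontriviallyNormedField 𝕜] [NormedRing E]
    [NormedAlgebra 𝕜 E] [NormedRing F] [NormedAlgebra 𝕜 F] {T : ℝ → E}
    (hT : IsIntegrableSemigroup T) (φ : E →A[𝕜] F) : IsIntegrableSemigroup fun t => φ (T t) where
  isOneParameterSemigroup s t hs ht := by
    simp only [hT.isOneParameterSemigroup hs ht, map_mul]
  continuousOn := φ.continuous.comp_continuousOn hT.continuousOn
  integrableOn := φ.toContinuousLinearMap.integrable_comp hT.integrableOn

end Semigroup

section TailIntegral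

variable {E : Type*} [NormedAddCommGroup E] [NormedSpace ℝ E] {f : ℝ → E} {a b s : ℝ}

theorem setIntegral_Ioi_eq_sub_intervalIntegral (hf : IntegrableOn f (Ioi a)) (hs : a ≤ s) :
    ∫ t in Ioi s, f t = (∫ t in Ioi a, f t) - ∫ t in a..s, f t :=
  eq_sub_of_add_eq' <|
    intervalIntegral.integral_interval_add_Ioi hf (hf.mono_set (Ioi_subset_Ioi hs))

theorem continuousOn_setIntegral_Ioi (hf : IntegrableOn f (Ioi a)) :
    ContinuousOn (fun s => ∫ t in Ioi s, f t) (Icc a b) := by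
  have hprim : ContinuousOn (fun s => ∫ t in Ioc a s, f t) (Icc a b) :=
    intervalIntegral.continuousOn_primitive
      ((integrableOn_Icc_iff_integrableOn_Ioc).mpr (hf.mono_set Ioc_subset_Ioi_self))
  have hdiff : ContinuousOn (fun s => (∫ t in Ioi a, f t) - ∫ t in Ioc a s, f t) (Icc a b) :=
    continuousOn_const.sub hprim
  refine hdiff.congr fun x hx => ?_
  rw [setIntegral_Ioi_eq_sub_intervalIntegral hf hx.1, intervalIntegral.integral_of_le hx.1]

theorem hasDerivAt_setIntegral_Ioi [CompleteSpace E] (hf : IntegrableOn f (Ioi a))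
    (hcont : ContinuousOn f (Ioi a)) (hs : a < s) :
    HasDerivAt (fun s => ∫ t in Ioi s, f t) (-f s) s := by
  have hprim : HasDerivAt (fun s => ∫ t in a..s, f t) (f s) s :=
    intervalIntegral.integral_hasDerivAt_right
      ((intervalIntegrable_iff_integrableOn_Ioc_of_le hs.le).mpr
        (hf.mono_set Ioc_subset_Ioi_self))
      (hcont.stronglyMeasurableAtFilter isOpen_Ioi s hs) (hcont.continuousAt (Ioi_mem_nhds hs))
  refine (hprim.const_sub (∫ t in Ioi a, f t)).congr_of_eventuallyEq ?_
  filter_upwards [Ioi_mem_nhds hs] with x hx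
  exact setIntegral_Ioi_eq_sub_intervalIntegral hf hx.le

end TailIntegral

section IntegrableSemigroup

theorem IsIntegrableSemigroup.eq_zero_of_integral_eq_zero {E : Type*} [NormedRing E]
    [NormedAlgebra ℝ E] [CompleteSpace E] {T : ℝ → E} (hT : IsIntegrableSemigroup T)
    (h0 : ∫ s in Ioi 0, T s = 0) {t : ℝ} (ht : 0 < t) : T t = 0 := by
  have htail : (fun s => ∫ r in Ioi s, T r) =ᶠ[𝓝 t] fun _ => 0 := by
    filter_upwards [Ioi_mem_nhds ht] with s hs
    rw [hT.isOneParameterSemigroup.setIntegral_Ioi hT.integrableOn hs, h0, mul_zero]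
  have hderiv := hasDerivAt_setIntegral_Ioi hT.integrableOn hT.continuousOn ht
  exact neg_eq_zero.mp (hderiv.unique ((hasDerivAt_const t 0).congr_of_eventuallyEq htail))

/-- With `ρ` the full integral, the tail `G s = ∫ t in Ioi s, g t` equals `g s * ρ`, so it solves
`G' = -G / ρ`, `G 0 = ρ`. -/
theorem IsIntegrableSemigroup.eq_cexp_of_integral_ne_zero {g : ℝ → ℂ}
    (hg : IsIntegrableSemigroup g) (h0 : ∫ s in Ioi 0, g s ≠ 0) {t : ℝ} (ht : 0 < t) :
    g t = Complex.exp (-t / ∫ s in Ioi 0, g s) := by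
  set ρ := ∫ s in Ioi 0, g s
  let G : ℝ → ℂ := fun s => ∫ r in Ioi s, g r
  have hG : ∀ s, 0 < s → G s = g s * ρ := fun s hs =>
    hg.isOneParameterSemigroup.setIntegral_Ioi hg.integrableOn hs
  have hderiv : ∀ s ∈ Ioo 0 t, HasDerivAt (fun s : ℝ => Complex.exp (s / ρ) * G s) 0 s := by
    intro s hs
    have hexp : HasDerivAt (fun s : ℝ => Complex.exp (s / ρ)) (Complex.exp (s / ρ) * (1 / ρ)) s :=
      (Complex.ofRealCLM.hasDerivAt.div_const ρ).cexp
    have hGderiv : HasDerivAt G (-g s) s :=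
      hasDerivAt_setIntegral_Ioi hg.integrableOn hg.continuousOn hs.1
    refine (hexp.mul hGderiv).congr_deriv ?_
    rw [hG s hs.1]
    field_simp
    ring
  have hcont : ContinuousOn (fun s : ℝ => Complex.exp (s / ρ) * G s) (Icc 0 t) :=
    (Continuous.continuousOn (by fun_prop)).mul (continuousOn_setIntegral_Ioi hg.integrableOn)
  have hconst : Complex.exp (t / ρ) * G t = Complex.exp ((0 : ℝ) / ρ) * G 0 := by
    have := intervalIntegral.integral_eq_sub_of_hasDerivAt_of_le ht.le hcont hderiv (by simp)
    rwa [intervalIntegral.integral_zero, eq_comm, sub_eq_zero] at this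
  have hexp : Complex.exp (t / ρ) * g t = 1 := by
    refine mul_right_cancel₀ h0 ?_
    calc Complex.exp (t / ρ) * g t * ρ = Complex.exp (t / ρ) * G t := by rw [hG t ht, mul_assoc]
      _ = 1 * ρ := by rw [hconst, Complex.ofReal_zero, zero_div, Complex.exp_zero]
  rw [neg_div, Complex.exp_neg]
  exact eq_inv_of_mul_eq_one_right hexp

end IntegrableSemigroup

section SpectralMapping

theorem mem_spectrum_iff_exists_character {B : Type*} [NormedRing B] [NormedAlgebra ℂ B]
    [CompleteSpace B] [IsMulCommutative B] {b : B} {z : ℂ} :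
    z ∈ spectrum ℂ b ↔ ∃ φ : B →A[ℂ] ℂ, φ b = z := by
  let _ : NormedCommRing B := { (inferInstance : NormedRing B) with mul_comm := mul_comm' }
  constructor
  · intro hz
    obtain ⟨φ, hφ⟩ := WeakDual.CharacterSpace.mem_spectrum_iff_exists.mp hz
    exact ⟨⟨WeakDual.CharacterSpace.toAlgHom φ, map_continuous φ⟩, hφ⟩
  · rintro ⟨φ, rfl⟩
    exact AlgHom.apply_mem_spectrum φ b

theorem isUnit_coe_centralizer_iff {𝕜 E : Type*} [CommRing 𝕜] [Ring E] [Algebra 𝕜 E] {S : Set E}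
    {b : Subalgebra.centralizer 𝕜 S} : IsUnit (b : E) ↔ IsUnit b := by
  refine ⟨?_, fun h => h.map (Subalgebra.centralizer 𝕜 S).val⟩
  rintro ⟨u, hu⟩
  have hinv : (↑u⁻¹ : E) ∈ Subalgebra.centralizer 𝕜 S := fun m hm =>
    Commute.units_inv_right (show Commute m u by rw [hu]; exact b.2 m hm)
  refine ⟨⟨b, ⟨↑u⁻¹, hinv⟩, Subtype.ext ?_, Subtype.ext ?_⟩, rfl⟩
  · exact (congrArg (· * (↑u⁻¹ : E)) hu).symm.trans u.mul_inv
  · exact (congrArg ((↑u⁻¹ : E) * ·) hu).symm.trans u.inv_mul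

theorem spectrum_coe_centralizer {𝕜 E : Type*} [CommRing 𝕜] [Ring E] [Algebra 𝕜 E] {S : Set E}
    (b : Subalgebra.centralizer 𝕜 S) : spectrum 𝕜 (b : E) = spectrum 𝕜 b := by
  ext z
  exact not_congr <|
    isUnit_coe_centralizer_iff (b := algebraMap 𝕜 (Subalgebra.centralizer 𝕜 S) z - b)

theorem IsIntegrableSemigroup.exists_lift {E : Type*} [NormedRing E] [NormedAlgebra ℂ E]
    {B : Subalgebra ℂ E} {T : ℝ → E} (hT : IsIntegrableSemigroup T) (hB : ∀ t, 0 < t → T t ∈ B) :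
    ∃ T' : ℝ → B, IsIntegrableSemigroup T' ∧ ∀ t, 0 < t → (T' t : E) = T t := by
  have hlift : ∀ t, 0 < t → ∃ b : B, (b : E) = T t := fun t ht => ⟨⟨T t, hB t ht⟩, rfl⟩
  choose! T' hT' using hlift
  have hcont : ContinuousOn T' (Ioi 0) :=
    IsInducing.subtypeVal.continuousOn_iff.mpr (hT.continuousOn.congr hT')
  refine ⟨T', ⟨fun s t hs ht => Subtype.ext ?_, hcont, ?_⟩, hT'⟩
  · rw [hT' _ (add_pos hs ht), hT.isOneParameterSemigroup hs ht, ← hT' s hs, ← hT' t ht]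
    rfl
  · refine Integrable.mono hT.integrableOn (hcont.aestronglyMeasurable measurableSet_Ioi) ?_
    filter_upwards [ae_restrict_mem measurableSet_Ioi] with t ht
    rw [← hT' t ht]
    rfl

theorem IsIntegrableSemigroup.mem_spectrum_iff_of_isMulCommutative {B : Type*} [NormedRing B]
    [NormedAlgebra ℂ B] [CompleteSpace B] [IsMulCommutative B] {T : ℝ → B}
    (hT : IsIntegrableSemigroup T) {t : ℝ} (ht : 0 < t) {z : ℂ} (hz : z ≠ 0) :
    z ∈ spectrum ℂ (T t) ↔
      ∃ w ∈ spectrum ℂ (∫ s in Ioi 0, T s), w ≠ 0 ∧ Complex.exp (-t / w) = z := by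
  have hint : ∀ φ : B →A[ℂ] ℂ, φ (∫ s in Ioi 0, T s) = ∫ s in Ioi 0, φ (T s) := fun φ =>
    (φ.toContinuousLinearMap.integral_comp_comm hT.integrableOn).symm
  simp only [mem_spectrum_iff_exists_character]
  constructor
  · rintro ⟨φ, rfl⟩
    have hne : φ (∫ s in Ioi 0, T s) ≠ 0 := fun h =>
      hz ((hT.map φ).eq_zero_of_integral_eq_zero (hint φ ▸ h) ht)
    refine ⟨_, ⟨φ, rfl⟩, hne, ?_⟩
    rw [hint] at hne ⊢
    exact ((hT.map φ).eq_cexp_of_integral_ne_zero hne ht).symm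
  · rintro ⟨_, ⟨φ, rfl⟩, hne, rfl⟩
    rw [hint] at hne ⊢
    exact ⟨φ, (hT.map φ).eq_cexp_of_integral_ne_zero hne ht⟩

variable {E : Type*} [NormedRing E] [NormedAlgebra ℂ E] [CompleteSpace E] {T : ℝ → E}

/-- The bicommutant of the semigroup is a commutative Banach algebra containing it, and passing to
it changes no spectra. -/
theorem IsIntegrableSemigroup.mem_spectrum_iff (hT : IsIntegrableSemigroup T) {t : ℝ}
    (ht : 0 < t) {z : ℂ} (hz : z ≠ 0) :
    z ∈ spectrum ℂ (T t) ↔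
      ∃ w ∈ spectrum ℂ (∫ s in Ioi 0, T s), w ≠ 0 ∧ Complex.exp (-t / w) = z := by
  let S : Set E := T '' Ioi 0
  let B : Subalgebra ℂ E := Subalgebra.centralizer ℂ S.centralizer
  have : IsMulCommutative B := by
    refine .of_setLike_mul_comm (centralizer_centralizer_comm_of_comm ?_)
    rintro _ ⟨s, hs, rfl⟩ _ ⟨t, ht, rfl⟩
    exact hT.isOneParameterSemigroup.commute hs ht
  have : CompleteSpace B := (isClosed_centralizer S.centralizer).completeSpace_coe
  obtain ⟨T', hT', hcoe⟩ := hT.exists_lift (B := B) fun s hs =>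
    subset_centralizer_centralizer (mem_image_of_mem T hs)
  have hint : ((∫ s in Ioi 0, T' s : B) : E) = ∫ s in Ioi 0, T s :=
    calc ((∫ s in Ioi 0, T' s : B) : E) = ∫ s in Ioi 0, (T' s : E) :=
          (B.valA.toContinuousLinearMap.integral_comp_comm hT'.integrableOn).symm
      _ = ∫ s in Ioi 0, T s := setIntegral_congr_fun measurableSet_Ioi hcoe
  rw [← hcoe t ht, ← hint, spectrum_coe_centralizer, spectrum_coe_centralizer]
  exact hT'.mem_spectrum_iff_of_isMulCommutative ht hz

theorem IsOneParameterSemigroup.mem_spectrum_iff_laplace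
    (hT : IsOneParameterSemigroup T) (hcont : ContinuousOn T (Ioi 0)) {m : ℂ}
    (hint : IntegrableOn (fun t : ℝ => Complex.exp (-m * t) • T t) (Ioi 0)) {t : ℝ} (ht : 0 < t)
    {z : ℂ} (hz : z ≠ 0) :
    z ∈ spectrum ℂ (T t) ↔
      ∃ w ∈ spectrum ℂ (∫ s : ℝ in Ioi 0, Complex.exp (-m * s) • T s),
        w ≠ 0 ∧ Complex.exp ((m - w⁻¹) * t) = z := by
  have hscaled : IsIntegrableSemigroup fun t : ℝ => Complex.exp (-m * t) • T t :=
    { isOneParameterSemigroup := fun s t hs ht => by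
        simp only [hT hs ht, smul_mul_smul_comm, ← Complex.exp_add, ← mul_add, Complex.ofReal_add]
      continuousOn := (Continuous.continuousOn (by fun_prop)).smul hcont
      integrableOn := hint }
  let u : ℂˣ := Units.mk0 _ (Complex.exp_ne_zero (-m * t))
  rw [← spectrum.smul_mem_smul_iff (r := u)]
  refine (hscaled.mem_spectrum_iff ht (smul_ne_zero u.ne_zero hz)).trans ?_
  refine exists_congr fun w => and_congr_right fun _ => and_congr_right fun _ => ?_
  have hexp : Complex.exp (-t / w) = u • Complex.exp ((m - w⁻¹) * t) := by
    rw [Units.smul_def, Units.val_mk0, smul_eq_mul, ← Complex.exp_add]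
    ring_nf
  rw [hexp]
  exact smul_left_cancel_iff u

end SpectralMapping

section ExponentialStability

/-- Exponential stability of `T : (0, ∞) → E`: its norm decays at an exponential rate. -/
def IsExponentiallyStable {E : Type*} [Norm E] (T : ℝ → E) : Prop :=
  ∃ M ε : ℝ, 0 < M ∧ 0 < ε ∧ ∀ t : ℝ, 0 < t → ‖T t‖ ≤ M * Real.exp (-ε * t)

theorem IsExponentiallyStable.tendsto_zero {E : Type*} [SeminormedAddGroup E] {T : ℝ → E}
    (hT : IsExponentiallyStable T) : Tendsto T atTop (𝓝 0) := by
  obtain ⟨M, ε, -, hε, hbound⟩ := hT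
  have hexp : Tendsto (fun t : ℝ => M * Real.exp (-ε * t)) atTop (𝓝 (M * 0)) :=
    (Real.tendsto_exp_atBot.comp
      (tendsto_id.const_mul_atTop_of_neg (neg_lt_zero.mpr hε))).const_mul M
  rw [mul_zero] at hexp
  exact squeeze_zero_norm' ((eventually_gt_atTop 0).mono hbound) hexp

theorem exists_pos_le_exp_neg_mul {q τ : ℝ} (hq : q < 1) (hτ : 0 < τ) :
    ∃ ε : ℝ, 0 < ε ∧ q ≤ Real.exp (-ε * τ) := by
  have hpos : 0 < max q (1 / 2) := lt_max_of_lt_right one_half_pos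
  have hlog : Real.log (max q (1 / 2)) < 0 :=
    Real.log_neg hpos (max_lt hq one_half_lt_one)
  refine ⟨-Real.log (max q (1 / 2)) / τ, div_pos (neg_pos.mpr hlog) hτ, ?_⟩
  rw [neg_div, neg_neg, div_mul_cancel₀ _ hτ.ne', Real.exp_log hpos]
  exact le_max_left _ _

namespace IsOneParameterSemigroup

theorem isExponentiallyStable_of_norm_lt_one {E : Type*} [SeminormedRing E] {T : ℝ → E}
    (hT : IsOneParameterSemigroup T) {τ C : ℝ} (hτ : 0 < τ) (hC : ∀ t ∈ Ioc 0 τ, ‖T t‖ ≤ C)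
    (hlt : ‖T τ‖ < 1) : IsExponentiallyStable T := by
  obtain ⟨ε, hε, hq⟩ := exists_pos_le_exp_neg_mul hlt hτ
  have hC0 : 0 ≤ C := (norm_nonneg _).trans (hC τ ⟨hτ, le_rfl⟩)
  set M : ℝ := (C + 1) * Real.exp (ε * τ) with hM
  have hdecay : ∀ n : ℕ, ∀ t, 0 < t → t ≤ n * τ → ‖T t‖ ≤ M * Real.exp (-ε * t) := by
    intro n
    induction n with
    | zero => intro t ht htn; simp only [CharP.cast_eq_zero, zero_mul] at htn; linarith
    | succ n ih =>
      intro t ht htn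
      rcases le_or_gt t τ with hle | hgt
      · calc ‖T t‖ ≤ (C + 1) * 1 := by linarith [hC t ⟨ht, hle⟩]
          _ ≤ (C + 1) * Real.exp (ε * τ + -ε * t) := by
            gcongr
            exact Real.one_le_exp (by nlinarith)
          _ = M * Real.exp (-ε * t) := by rw [Real.exp_add, hM, mul_assoc]
      · have hbound : ‖T (t - τ)‖ ≤ M * Real.exp (-ε * (t - τ)) :=
          ih (t - τ) (sub_pos.mpr hgt) (by push_cast at htn; linarith)
        calc ‖T t‖ = ‖T (t - τ) * T τ‖ := by rw [← hT (sub_pos.mpr hgt) hτ, sub_add_cancel]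
          _ ≤ ‖T (t - τ)‖ * ‖T τ‖ := norm_mul_le _ _
          _ ≤ M * Real.exp (-ε * (t - τ)) * Real.exp (-ε * τ) := by gcongr
          _ = M * Real.exp (-ε * t) := by rw [mul_assoc, ← Real.exp_add]; ring_nf
  refine ⟨M, ε, by positivity, hε, fun t ht => ?_⟩
  obtain ⟨n, hn⟩ := exists_nat_ge (t / τ)
  exact hdecay n t ht ((div_le_iff₀ hτ).mp hn)

end IsOneParameterSemigroup

theorem tendsto_pow_atTop_nhds_zero_iff_spectrum {E : Type*} [NormedRing E] [NormedAlgebra ℂ E]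
    [CompleteSpace E] {a : E} :
    Tendsto (fun n : ℕ => a ^ n) atTop (𝓝 0) ↔ ∀ z ∈ spectrum ℂ a, ‖z‖ < 1 := by
  constructor
  · intro h z hz
    have hle : ∀ n : ℕ, ‖z ^ n‖ ≤ ‖a ^ n‖ * ‖(1 : E)‖ := fun n =>
      spectrum.norm_le_norm_mul_of_mem (spectrum.pow_mem_pow a n hz)
    have hzero : Tendsto (fun n : ℕ => ‖a ^ n‖ * ‖(1 : E)‖) atTop (𝓝 0) := by
      simpa only [norm_zero, zero_mul] using h.norm.mul_const ‖(1 : E)‖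
    exact tendsto_pow_atTop_nhds_zero_iff_norm_lt_one.mp (squeeze_zero_norm hle hzero)
  · intro h
    cases subsingleton_or_nontrivial E
    · exact tendsto_const_nhds.congr fun n => Subsingleton.elim 0 (a ^ n)
    obtain ⟨r, har, hr⟩ := exists_between
      (spectrum.spectralRadius_lt_of_forall_lt a (r := 1) fun z hz => h z hz)
    have hle : ∀ᶠ n : ℕ in atTop, ‖a ^ n‖ₑ ≤ r ^ n := by
      have hgelfand := spectrum.pow_nnnorm_pow_one_div_tendsto_nhds_spectralRadius a
      filter_upwards [hgelfand.eventually_lt_const har, eventually_gt_atTop 0] with n hn hn0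
      rw [one_div] at hn
      rw [← ENNReal.rpow_natCast]
      exact (ENNReal.rpow_inv_le_iff (by positivity)).mp hn.le
    rw [tendsto_zero_iff_enorm_tendsto_zero]
    exact tendsto_of_tendsto_of_tendsto_of_le_of_le' tendsto_const_nhds
      (ENNReal.tendsto_pow_atTop_nhds_zero_iff.mpr hr) (.of_forall fun _ => zero_le) hle

theorem IsOneParameterSemigroup.isExponentiallyStable_iff_tendsto_pow {E : Type*}
    [SeminormedRing E] {T : ℝ → E} (hT : IsOneParameterSemigroup T)
    (hbdd : ∀ τ : ℝ, ∃ C : ℝ, ∀ t ∈ Ioc 0 τ, ‖T t‖ ≤ C) :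
    IsExponentiallyStable T ↔ Tendsto (fun n : ℕ => T 1 ^ n) atTop (𝓝 0) := by
  have hpow : ∀ n : ℕ, T 1 ^ (n + 1) = T ((n + 1 : ℕ) : ℝ) := fun n => by
    rw [hT.pow_succ one_pos, mul_one, Nat.cast_succ]
  rw [← tendsto_add_atTop_iff_nat 1]
  simp only [hpow]
  constructor
  · exact fun h => h.tendsto_zero.comp <|
      tendsto_natCast_atTop_atTop.comp (tendsto_add_atTop_nat 1)
  · intro h
    obtain ⟨n, hn⟩ := (h.norm.eventually_lt_const (norm_zero.trans_lt one_pos)).exists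
    obtain ⟨C, hC⟩ := hbdd (n + 1 : ℕ)
    exact hT.isExponentiallyStable_of_norm_lt_one (by positivity) hC hn

end ExponentialStability

section Resolvent

omit [CompleteSpace X]

namespace IsResolventOf

variable {A : X →ₗ.[ℂ] X} {m l : ℂ} {R R' : X →L[ℂ] X}

theorem one_add_smul_mul_one_add_smul (hR : IsResolventOf A m R) (hR' : IsResolventOf A l R') :
    (1 + (l - m) • R) * (1 + (m - l) • R') = 1 := by
  ext x
  obtain ⟨hx, hl⟩ := hR'.1 x
  have hm : m • R' x - A ⟨R' x, hx⟩ = x + (m - l) • R' x :=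
    calc m • R' x - A ⟨R' x, hx⟩ = (l • R' x - A ⟨R' x, hx⟩) + (m - l) • R' x := by module
      _ = x + (m - l) • R' x := by rw [hl]
  have hRx : R (x + (m - l) • R' x) = R' x := hm ▸ hR.2 ⟨R' x, hx⟩
  calc x + (m - l) • R' x + (l - m) • R (x + (m - l) • R' x) = x := by rw [hRx]; module

theorem mul_inverse_one_add_smul (hR : IsResolventOf A m R) {V : X →L[ℂ] X}
    (hUV : (1 + (l - m) • R) * V = 1) (hVU : V * (1 + (l - m) • R) = 1) :
    IsResolventOf A l (R * V) := by
  constructor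
  · intro x
    obtain ⟨hx, hm⟩ := hR.1 (V x)
    refine ⟨hx, ?_⟩
    calc l • R (V x) - A ⟨R (V x), hx⟩
        = (m • R (V x) - A ⟨R (V x), hx⟩) + (l - m) • R (V x) := by module
      _ = ((1 + (l - m) • R) * V) x := by rw [hm]; rfl
      _ = x := by rw [hUV]; rfl
  · intro y
    have hm : R (m • (y : X) - A y) = y := hR.2 y
    calc R (V (l • (y : X) - A y))
        = R (V ((m • (y : X) - A y) + (l - m) • R (m • (y : X) - A y))) := by
          rw [hm]; congr 2; module
      _ = R ((V * (1 + (l - m) • R)) (m • (y : X) - A y)) := rfl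
      _ = y := by rw [hVU]; exact hm

theorem isUnit_one_add_smul_iff (hR : IsResolventOf A m R) :
    IsUnit (1 + (l - m) • R) ↔ l ∉ spectrumOf A := by
  refine Iff.trans ?_ not_not.symm
  constructor
  · rintro ⟨U, hU⟩
    exact ⟨_, hR.mul_inverse_one_add_smul (hU ▸ U.mul_inv) (hU ▸ U.inv_mul)⟩
  · rintro ⟨R', hR'⟩
    exact ⟨⟨_, _, hR.one_add_smul_mul_one_add_smul hR', hR'.one_add_smul_mul_one_add_smul hR⟩, rfl⟩

theorem mem_spectrum_iff (hR : IsResolventOf A m R) {w : ℂ} (hw : w ≠ 0) :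
    w ∈ spectrum ℂ R ↔ m - w⁻¹ ∈ spectrumOf A := by
  have hfactor : algebraMap ℂ (X →L[ℂ] X) w - R =
      Units.mk0 w hw • (1 + (m - w⁻¹ - m) • R) := by
    rw [Units.smul_mk0, Algebra.algebraMap_eq_smul_one, smul_add, smul_smul]
    have : w * (m - w⁻¹ - m) = -1 := by field_simp; ring
    rw [this]; module
  rw [spectrum.mem_iff, hfactor, isUnit_smul_iff, hR.isUnit_one_add_smul_iff, not_not]

end IsResolventOf

end Resolvent

section Generator

omit [CompleteSpace X]

theorem integrableOn_cexp_smul {E : Type*} [NormedAddCommGroup E] [NormedSpace ℂ E] {f : ℝ → E}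
    {M ω : ℝ} {m : ℂ} (hf : ContinuousOn f (Ioi 0))
    (hbound : ∀ t : ℝ, 0 < t → ‖f t‖ ≤ M * Real.exp (ω * t)) (hm : ω < m.re) :
    IntegrableOn (fun t : ℝ => Complex.exp (-m * t) • f t) (Ioi 0) := by
  have hcont : ContinuousOn (fun t : ℝ => Complex.exp (-m * t) • f t) (Ioi 0) :=
    (Continuous.continuousOn (by fun_prop)).smul hf
  refine Integrable.mono' ((exp_neg_integrableOn_Ioi 0 (sub_pos.mpr hm)).const_mul M)
    (hcont.aestronglyMeasurable measurableSet_Ioi) ?_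
  filter_upwards [ae_restrict_mem measurableSet_Ioi] with t ht
  calc ‖Complex.exp (-m * t) • f t‖ = Real.exp (-m.re * t) * ‖f t‖ := by
        rw [norm_smul, Complex.norm_exp, Complex.re_mul_ofReal, Complex.neg_re]
    _ ≤ Real.exp (-m.re * t) * (M * Real.exp (ω * t)) := by gcongr; exact hbound t ht
    _ = M * Real.exp (-(m.re - ω) * t) := by
        rw [mul_left_comm, ← Real.exp_add]; ring_nf

variable {A : X →ₗ.[ℂ] X} {T : ℝ → X →L[ℂ] X}

theorem Generates.isOneParameterSemigroup (hgen : Generates A T) : IsOneParameterSemigroup T := by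
  obtain ⟨_, _, ⟨-, hadd, -⟩, -⟩ := hgen
  exact fun s t hs ht => hadd s t hs ht

theorem Generates.exists_forall_Ioc_norm_le (hgen : Generates A T) (τ : ℝ) :
    ∃ C : ℝ, ∀ t ∈ Ioc 0 τ, ‖T t‖ ≤ C := by
  obtain ⟨M, ω, ⟨-, -, ⟨hM, hbound⟩, -⟩, -⟩ := hgen
  refine ⟨M * Real.exp (|ω| * τ), fun t ht => (hbound t ht.1).trans ?_⟩
  gcongr
  exacts [ht.1.le, le_abs_self ω, ht.2]

theorem Generates.exists_isResolventOf_laplace (hgen : Generates A T)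
    (hcont : ContinuousOn T (Ioi 0)) :
    ∃ m : ℂ, IntegrableOn (fun t : ℝ => Complex.exp (-m * t) • T t) (Ioi 0) ∧
      IsResolventOf A m (∫ t : ℝ in Ioi 0, Complex.exp (-m * t) • T t) := by
  obtain ⟨M, ω, ⟨-, -, ⟨-, hbound⟩, -⟩, hres⟩ := hgen
  obtain ⟨R, hR, hRT⟩ := hres (ω + 1) (lt_add_one ω)
  have hint := integrableOn_cexp_smul (m := (ω + 1 : ℝ)) hcont hbound (lt_add_one ω)
  refine ⟨(ω + 1 : ℝ), hint, ?_⟩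
  convert hR using 1
  ext x
  rw [hRT x, ContinuousLinearMap.integral_apply hint]
  refine setIntegral_congr_fun measurableSet_Ioi fun t _ => ?_
  rw [smul_apply, ← Complex.coe_smul]
  push_cast
  rfl

theorem ofReal_mem_sector {θ t : ℝ} (hθ : 0 < θ) (ht : 0 < t) : (t : ℂ) ∈ Sector θ :=
  ⟨Complex.ofReal_ne_zero.mpr ht.ne', by rwa [Complex.arg_ofReal_of_nonneg ht.le, abs_zero]⟩

theorem IsHolomorphicSG.continuousOn (hhol : IsHolomorphicSG T) : ContinuousOn T (Ioi 0) := by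
  obtain ⟨θ, hθ, -, S, hS, hST, -⟩ := hhol
  have hSreal : ContinuousOn (fun t : ℝ => S t) (Ioi 0) :=
    hS.continuousOn.comp Complex.continuous_ofReal.continuousOn
      fun _ ht => ofReal_mem_sector hθ ht
  exact hSreal.congr fun t ht => (hST t ht).symm

end Generator

theorem Generates.mem_spectrum_iff {A : X →ₗ.[ℂ] X} {T : ℝ → X →L[ℂ] X} (hgen : Generates A T)
    (hcont : ContinuousOn T (Ioi 0)) {t : ℝ} (ht : 0 < t) {z : ℂ} (hz : z ≠ 0) :
    z ∈ spectrum ℂ (T t) ↔ ∃ l ∈ spectrumOf A, Complex.exp (l * t) = z := by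
  obtain ⟨m, hint, hR⟩ := hgen.exists_isResolventOf_laplace hcont
  rw [hgen.isOneParameterSemigroup.mem_spectrum_iff_laplace hcont hint ht hz]
  constructor
  · rintro ⟨w, hw, hw0, rfl⟩
    exact ⟨m - w⁻¹, (hR.mem_spectrum_iff hw0).mp hw, rfl⟩
  · rintro ⟨l, hl, rfl⟩
    have hne : m - l ≠ 0 := fun h => (sub_eq_zero.mp h ▸ hl) ⟨_, hR⟩
    have hl' : m - (m - l)⁻¹⁻¹ = l := by rw [inv_inv, sub_sub_cancel]
    exact ⟨(m - l)⁻¹, (hR.mem_spectrum_iff (inv_ne_zero hne)).mpr (hl'.symm ▸ hl),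
      inv_ne_zero hne, by rw [hl']⟩

theorem holomorphic_exponentially_stable_iff_spectrum_general
    (A : X →ₗ.[ℂ] X) (T : ℝ → X →L[ℂ] X)
    (hgen : Generates A T) (hcont : ContinuousOn T (Ioi 0)) :
    IsExponentiallyStable T ↔ ∀ l ∈ spectrumOf A, l.re < 0 := by
  have hexp : ∀ l : ℂ, ‖Complex.exp (l * (1 : ℝ))‖ < 1 ↔ l.re < 0 := fun l => by
    rw [Complex.ofReal_one, mul_one, Complex.norm_exp, Real.exp_lt_one_iff]
  calc IsExponentiallyStable T
      ↔ Tendsto (fun n : ℕ => T 1 ^ n) atTop (𝓝 0) :=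
        hgen.isOneParameterSemigroup.isExponentiallyStable_iff_tendsto_pow
          hgen.exists_forall_Ioc_norm_le
    _ ↔ ∀ z ∈ spectrum ℂ (T 1), ‖z‖ < 1 := tendsto_pow_atTop_nhds_zero_iff_spectrum
    _ ↔ ∀ l ∈ spectrumOf A, l.re < 0 := by
      constructor
      · exact fun h l hl => (hexp l).mp <| h _ <|
          (hgen.mem_spectrum_iff hcont one_pos (Complex.exp_ne_zero _)).mpr ⟨l, hl, rfl⟩
      · intro h z hz
        rcases eq_or_ne z 0 with rfl | hz0
        · exact norm_zero.trans_lt one_pos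
        obtain ⟨l, hl, rfl⟩ := (hgen.mem_spectrum_iff hcont one_pos hz0).mp hz
        exact (hexp l).mpr (h l hl)

/-- a holomorphic semigroup is exponentially stable iff the spectrum of its
generator lies in the open left half plane. -/
theorem holomorphic_exponentially_stable_iff_spectrum
    (A : X →ₗ.[ℂ] X) (T : ℝ → X →L[ℂ] X)
    (hgen : Generates A T) (hhol : IsHolomorphicSG T) :
    (∃ M ε : ℝ, 0 < M ∧ 0 < ε ∧ ∀ t : ℝ, 0 < t → ‖T t‖ ≤ M * Real.exp (-ε * t)) ↔
    (∀ l ∈ spectrumOf A, l.re < 0) :=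
  holomorphic_exponentially_stable_iff_spectrum_general A T hgen hhol.continuousOn
end

section
/- Let K be a compact metric space and let S and T be positive kernel operators on B_b(K) which are strong Feller, i.e. Sf and Tf are continuous on K for every f ∈ B_b(K). Then the product ST is a compact operator on B_b(K); in particular, the set {STf : f ∈ B_b(K), ‖f‖_∞ ≤ 1} is relatively compact in C(K) with the supremum norm. -/
open MeasureTheory ProbabilityTheory Filter Topology

variable {K : Type*} [MetricSpace K] [CompactSpace K] [MeasurableSpace K] [BorelSpace K]

/-- `f` belongs to `B_b(K)`: it is Borel measurable and bounded. -/
def IsBb (f : K → ℝ) : Prop := Measurable f ∧ ∃ C : ℝ, ∀ x, |f x| ≤ C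

/-- `T` is a bounded linear operator on `B_b(K)`. -/
def IsBoundedLinearBb (T : (K → ℝ) → K → ℝ) : Prop :=
  (∀ f, IsBb f → IsBb (T f)) ∧
  (∀ f g, IsBb f → IsBb g → T (f + g) = T f + T g) ∧
  (∀ (c : ℝ) (f), IsBb f → T (c • f) = c • T f) ∧
  (∃ C : ℝ, ∀ f, IsBb f → ∀ C' : ℝ, (∀ x, |f x| ≤ C') → ∀ x, |T f x| ≤ C * C')

/-- `T` is a positive operator on `B_b(K)`. -/
def IsPositiveBb (T : (K → ℝ) → K → ℝ) : Prop :=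
  ∀ f, IsBb f → (∀ x, 0 ≤ f x) → ∀ x, 0 ≤ T f x

/-- `T` is a (positive) kernel operator on `B_b(K)`: it is given by integration against a
bounded positive kernel `k` on `K`. -/
def IsKernelOperator (T : (K → ℝ) → K → ℝ) : Prop :=
  ∃ k : Kernel K K, IsFiniteKernel k ∧ ∀ f, IsBb f → ∀ x, T f x = ∫ y, f y ∂(k x)

/-!
A strong Feller kernel `t` on a separable space is dominated by a single finite measure `μ`, a
weighted sum of the measures `t y` over a countable dense set of `y`. Given a bounded sequence of
functions, `L¹(μ)` may be taken over the σ-algebra they generate and is then separable, so the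
sequence has a weak-* convergent subsequence in `L^∞(μ)`; pairing it with the densities `dt(y)/dμ`
shows that its image under `T` converges pointwise. A strong Feller operator `S` over a compact
space turns bounded pointwise convergence into uniform convergence: the sets on which the tail of
the sequence is not yet `ε`-close to the limit decrease to `∅`, and by Dini's theorem their masses
decrease to `0` uniformly.
-/

theorem isCompact_closure_of_forall_exists_subseq_tendsto {α : Type*} [PseudoMetricSpace α]
    {s : Set α} (hs : ∀ u : ℕ → α, (∀ n, u n ∈ s) →
      ∃ a, ∃ φ : ℕ → ℕ, StrictMono φ ∧ Tendsto (u ∘ φ) atTop (𝓝 a)) :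
    IsCompact (closure s) := by
  refine isCompact_iff_isSeqCompact.2 fun u hu => ?_
  choose v hvs huv using fun n =>
    Metric.mem_closure_iff.1 (hu n) (1 / ((n : ℝ) + 1)) Nat.one_div_pos_of_nat
  obtain ⟨a, φ, hφ, hva⟩ := hs v hvs
  refine ⟨a, mem_closure_of_tendsto hva (.of_forall fun n => hvs (φ n)), φ, hφ, ?_⟩
  have hdist : Tendsto (fun n => dist (v (φ n)) (u (φ n))) atTop (𝓝 0) :=
    squeeze_zero (fun _ => dist_nonneg) (fun n => (dist_comm _ _).trans_le (huv (φ n)).le)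
      (tendsto_one_div_add_atTop_nhds_zero_nat.comp hφ.tendsto_atTop)
  exact (tendsto_iff_of_dist hdist).1 hva

section BoundedFunctions

variable {X : Type*} [MeasurableSpace X]

theorem IsBb.integrable {f : X → ℝ} (hf : IsBb f) (μ : Measure X) [IsFiniteMeasure μ] :
    Integrable f μ := by
  obtain ⟨hf_meas, C, hfC⟩ := hf
  exact .of_bound hf_meas.aestronglyMeasurable C (.of_forall hfC)

theorem abs_integral_le_of_forall_notMem (μ : Measure X) [IsFiniteMeasure μ] {f : X → ℝ}
    {A : Set X} {C ε : ℝ} (hA : MeasurableSet A) (hε : 0 ≤ ε) (hfC : ∀ x ∈ A, |f x| ≤ C)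
    (hfε : ∀ x ∉ A, |f x| ≤ ε) :
    |∫ x, f x ∂μ| ≤ ε * μ.real Set.univ + C * μ.real A := by
  have hC_int : Integrable (A.indicator fun _ => C) μ := (integrable_const C).indicator hA
  calc |∫ x, f x ∂μ|
      ≤ ∫ x, ε + A.indicator (fun _ => C) x ∂μ := by
        rw [← Real.norm_eq_abs]
        refine norm_integral_le_of_norm_le ((integrable_const ε).add hC_int)
          (.of_forall fun x => ?_)
        by_cases hx : x ∈ A
        · simpa only [Set.indicator_of_mem hx] using! (hfC x hx).trans (le_add_of_nonneg_left hε)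
        · simpa only [Set.indicator_of_notMem hx, add_zero] using! hfε x hx
    _ = ε * μ.real Set.univ + C * μ.real A := by
        rw [integral_add (integrable_const ε) hC_int, integral_const,
          integral_indicator_const C hA, smul_eq_mul, smul_eq_mul, mul_comm, mul_comm C]

theorem exists_subseq_tendsto_integral_mul_of_bounded [MeasurableSpace.CountablyGenerated X]
    (μ : Measure X) [SigmaFinite μ] {f : ℕ → X → ℝ} {C : ℝ} (hf : ∀ n, Measurable (f n))
    (hfC : ∀ n x, |f n x| ≤ C) :
    ∃ φ : ℕ → ℕ, StrictMono φ ∧ ∀ g, Integrable g μ →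
      ∃ l, Tendsto (fun n => ∫ x, f (φ n) x * g x ∂μ) atTop (𝓝 l) := by
  have : Fact ((1 : ENNReal) ≠ ⊤) := ⟨ENNReal.one_ne_top⟩
  let pairing := (ContinuousLinearMap.mul ℝ ℝ).lpPairing μ ⊤ 1
  have hf_mem n : MemLp (f n) ⊤ μ :=
    memLp_top_of_bound (hf n).aestronglyMeasurable C (.of_forall (hfC n))
  have hf_norm n : ‖(hf_mem n).toLp (f n)‖ ≤ (ENNReal.ofReal C).toReal := by
    rw [Lp.norm_toLp, eLpNorm_exponent_top]
    exact ENNReal.toReal_mono ENNReal.ofReal_ne_top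
      (eLpNormEssSup_le_of_ae_bound (.of_forall (hfC n)))
  obtain ⟨Ψ, -, φ, hφ, hΨ⟩ := WeakDual.isSeqCompact_closedBall ℝ (Lp ℝ 1 μ) 0
    (‖pairing‖ * (ENNReal.ofReal C).toReal)
    (x := fun n => StrongDual.toWeakDual (pairing ((hf_mem n).toLp (f n)))) fun n => by
      simpa using! pairing.le_of_opNorm_le_of_le le_rfl (hf_norm n)
  refine ⟨φ, hφ, fun g hg => ⟨Ψ (hg.toL1 g), ?_⟩⟩
  refine (((WeakDual.eval_continuous (hg.toL1 g)).tendsto Ψ).comp hΨ).congr fun n => ?_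
  refine (ContinuousLinearMap.lpPairing_eq_integral ..).trans (integral_congr_ae ?_)
  filter_upwards [(hf_mem (φ n)).coeFn_toLp, hg.coeFn_toL1] with x hfx hgx
  rw [hfx, hgx, ContinuousLinearMap.mul_apply']

end BoundedFunctions

section SetwiseContinuity

variable {ι X Y : Type*} [TopologicalSpace ι] [MeasurableSpace X] [MeasurableSpace Y]

/-- The strong Feller property of a family of finite measures, tested on sets: `κ i` depends
continuously on `i` for the topology of setwise convergence. Finiteness of the measures is to be
assumed separately, since `Measure.real` sends infinite masses to `0`. -/
def SetwiseContinuous (κ : ι → Measure X) : Prop :=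
  ∀ A, MeasurableSet A → Continuous fun i => (κ i).real A

namespace SetwiseContinuous

variable {κ : ι → Measure X}

theorem of_continuous_integral
    (hκ : ∀ f : X → ℝ, IsBb f → Continuous fun i => ∫ x, f x ∂κ i) :
    SetwiseContinuous κ := by
  intro A hA
  have hA_Bb : IsBb (A.indicator (1 : X → ℝ)) :=
    ⟨measurable_one.indicator hA, 1, fun x => by by_cases hx : x ∈ A <;> simp [hx]⟩
  simpa only [integral_indicator_one hA] using hκ _ hA_Bb

theorem map (hκ : SetwiseContinuous κ) {F : X → Y} (hF : Measurable F) :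
    SetwiseContinuous fun i => (κ i).map F := by
  intro A hA
  simpa only [map_measureReal_apply hF hA] using hκ _ (hF hA)

theorem exists_forall_measureReal_univ_le [CompactSpace ι] (hκ : SetwiseContinuous κ) :
    ∃ M, ∀ i, (κ i).real Set.univ ≤ M := by
  obtain ⟨M, hM⟩ := (isCompact_range (hκ _ .univ)).bddAbove
  exact ⟨M, fun i => hM ⟨i, rfl⟩⟩

variable [∀ i, IsFiniteMeasure (κ i)]

theorem exists_forall_absolutelyContinuous [TopologicalSpace.SeparableSpace ι]
    (hκ : SetwiseContinuous κ) : ∃ μ : Measure X, IsFiniteMeasure μ ∧ ∀ i, κ i ≪ μ := by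
  obtain ⟨D, hD_countable, hD_dense⟩ := TopologicalSpace.exists_countable_dense ι
  have : Countable D := hD_countable.to_subtype
  let ν : Measure X := Measure.sum fun d : D => κ d
  refine ⟨ν.toFinite, inferInstance, fun i => .trans (.mk fun A hA hνA => ?_)
    (absolutelyContinuous_toFinite ν)⟩
  have hzero_on_D : Set.EqOn (fun i => (κ i).real A) 0 D := fun d hd =>
    (measureReal_eq_zero_iff (measure_ne_top _ _)).2
      ((Measure.sum_apply_eq_zero' hA).1 hνA ⟨d, hd⟩)
  have hzero := (hκ A hA).ext_on hD_dense continuous_const hzero_on_D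
  exact (measureReal_eq_zero_iff (measure_ne_top _ _)).1 (congrFun hzero i)

theorem exists_subseq_tendsto_integral_of_countablyGenerated
    [MeasurableSpace.CountablyGenerated X] [TopologicalSpace.SeparableSpace ι]
    (hκ : SetwiseContinuous κ) {f : ℕ → X → ℝ} {C : ℝ} (hf : ∀ n, Measurable (f n))
    (hfC : ∀ n x, |f n x| ≤ C) :
    ∃ φ : ℕ → ℕ, StrictMono φ ∧ ∃ G : ι → ℝ,
      ∀ i, Tendsto (fun n => ∫ x, f (φ n) x ∂κ i) atTop (𝓝 (G i)) := by
  obtain ⟨μ, _, hκμ⟩ := hκ.exists_forall_absolutelyContinuous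
  obtain ⟨φ, hφ, hlim⟩ := exists_subseq_tendsto_integral_mul_of_bounded μ hf hfC
  choose G hG using fun i => hlim _ (Measure.integrable_toReal_rnDeriv (μ := κ i) (ν := μ))
  refine ⟨φ, hφ, G, fun i => (hG i).congr fun n => ?_⟩
  simp only [← integral_rnDeriv_smul (hκμ i), smul_eq_mul, mul_comm]

-- Mapping `x` to the sequence `(f n x)ₙ` replaces `X` by a countably generated space.
theorem exists_subseq_tendsto_integral [TopologicalSpace.SeparableSpace ι]
    (hκ : SetwiseContinuous κ) {f : ℕ → X → ℝ} {C : ℝ} (hf : ∀ n, Measurable (f n))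
    (hfC : ∀ n x, |f n x| ≤ C) :
    ∃ φ : ℕ → ℕ, StrictMono φ ∧ ∃ G : ι → ℝ,
      ∀ i, Tendsto (fun n => ∫ x, f (φ n) x ∂κ i) atTop (𝓝 (G i)) := by
  let F : X → ℕ → Set.Icc (-C) C := fun x n => ⟨f n x, abs_le.1 (hfC n x)⟩
  have hF : Measurable F := measurable_pi_lambda _ fun n => (hf n).subtype_mk
  have hcoord n : Measurable fun a : ℕ → Set.Icc (-C) C => (a n : ℝ) :=
    measurable_subtype_coe.comp (measurable_pi_apply n)
  obtain ⟨φ, hφ, G, hG⟩ := (hκ.map hF).exists_subseq_tendsto_integral_of_countablyGenerated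
    hcoord fun n a => abs_le.2 (a n).2
  refine ⟨φ, hφ, G, fun i => (hG i).congr fun n => ?_⟩
  exact integral_map hF.aemeasurable (hcoord (φ n)).aestronglyMeasurable

variable [CompactSpace ι]

theorem tendstoUniformly_measureReal_of_antitone (hκ : SetwiseContinuous κ) {A : ℕ → Set X}
    (hA : ∀ n, MeasurableSet (A n)) (hA_anti : Antitone A) (hA_inter : ⋂ n, A n = ∅) :
    TendstoUniformly (fun n i => (κ i).real (A n)) (fun _ => 0) atTop := by
  refine Antitone.tendstoUniformly_of_forall_tendsto (fun n => hκ _ (hA n))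
    (fun m n hmn i => measureReal_mono (hA_anti hmn)) continuous_const fun i => ?_
  have hlim := tendsto_measure_iInter_atTop (μ := κ i) (fun n => (hA n).nullMeasurableSet) hA_anti
    ⟨0, measure_ne_top _ _⟩
  rw [hA_inter, measure_empty] at hlim
  exact (ENNReal.tendsto_toReal ENNReal.zero_ne_top).comp hlim

theorem tendstoUniformly_measureReal_le_abs_sub (hκ : SetwiseContinuous κ) {g : ℕ → X → ℝ}
    {G : X → ℝ} (hg : ∀ n, Measurable (g n))
    (hgG : ∀ x, Tendsto (fun n => g n x) atTop (𝓝 (G x))) {ε : ℝ} (hε : 0 < ε) :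
    TendstoUniformly (fun n i => (κ i).real {x | ε ≤ |g n x - G x|}) (fun _ => 0) atTop := by
  have hG : Measurable G := measurable_of_tendsto_metrizable hg (tendsto_pi_nhds.2 hgG)
  let tail : ℕ → Set X := fun n => ⋃ m ≥ n, {x | ε ≤ |g m x - G x|}
  have htail n : MeasurableSet (tail n) :=
    .biUnion (Set.to_countable _) fun m _ => measurableSet_le measurable_const ((hg m).sub hG).abs
  have htail_anti : Antitone tail := fun m n hmn =>
    Set.biUnion_subset_biUnion_left fun i hi => le_trans hmn hi
  have htail_inter : ⋂ n, tail n = ∅ := by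
    refine Set.eq_empty_of_forall_notMem fun x hx => ?_
    obtain ⟨N, hN⟩ := Metric.tendsto_atTop.1 (hgG x) ε hε
    obtain ⟨m, hNm, hm⟩ := Set.mem_iUnion₂.1 (Set.mem_iInter.1 hx N)
    exact (hN m hNm).not_ge hm
  have hunif := hκ.tendstoUniformly_measureReal_of_antitone htail htail_anti htail_inter
  refine Metric.tendstoUniformly_iff.2 fun η hη => ?_
  filter_upwards [Metric.tendstoUniformly_iff.1 hunif η hη] with n hn i
  simp only [dist_zero_left, Real.norm_of_nonneg measureReal_nonneg] at hn ⊢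
  have hsub : {x | ε ≤ |g n x - G x|} ⊆ tail n := fun x hx => Set.mem_iUnion₂.2 ⟨n, le_rfl, hx⟩
  exact (measureReal_mono hsub (measure_ne_top _ _)).trans_lt (hn i)

theorem tendstoUniformly_integral (hκ : SetwiseContinuous κ) {g : ℕ → X → ℝ} {G : X → ℝ} {C : ℝ}
    (hg : ∀ n, Measurable (g n)) (hgC : ∀ n x, |g n x| ≤ C)
    (hgG : ∀ x, Tendsto (fun n => g n x) atTop (𝓝 (G x))) :
    TendstoUniformly (fun n i => ∫ x, g n x ∂κ i) (fun i => ∫ x, G x ∂κ i) atTop := by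
  have hG : Measurable G := measurable_of_tendsto_metrizable hg (tendsto_pi_nhds.2 hgG)
  have hGC x : |G x| ≤ C := le_of_tendsto (hgG x).abs (.of_forall fun n => hgC n x)
  obtain ⟨M, hM⟩ := hκ.exists_forall_measureReal_univ_le
  refine Metric.tendstoUniformly_iff.2 fun ε hε => ?_
  obtain ⟨η, hη, hηε⟩ := exists_pos_mul_lt hε (M + (|C| + |C|))
  have hunif := hκ.tendstoUniformly_measureReal_le_abs_sub hg hgG hη
  filter_upwards [Metric.tendstoUniformly_iff.1 hunif η hη] with n hn i
  let A : Set X := {x | η ≤ |g n x - G x|}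
  have hA : MeasurableSet A := measurableSet_le measurable_const ((hg n).sub hG).abs
  have hAη : (κ i).real A ≤ η := by
    simpa only [dist_zero_left, Real.norm_of_nonneg measureReal_nonneg] using (hn i).le
  have hbound x : |g n x - G x| ≤ |C| + |C| :=
    (abs_sub _ _).trans (add_le_add ((hgC n x).trans (le_abs_self C))
      ((hGC x).trans (le_abs_self C)))
  calc dist (∫ x, G x ∂κ i) (∫ x, g n x ∂κ i)
      = |∫ x, g n x - G x ∂κ i| := by
        rw [dist_comm, Real.dist_eq, integral_sub (IsBb.integrable ⟨hg n, C, hgC n⟩ _)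
          (IsBb.integrable ⟨hG, C, hGC⟩ _)]
    _ ≤ η * (κ i).real Set.univ + (|C| + |C|) * (κ i).real A :=
        abs_integral_le_of_forall_notMem (κ i) hA hη.le (fun x _ => hbound x)
          fun x hx => (not_le.1 hx).le
    _ ≤ η * M + (|C| + |C|) * η := by gcongr; exact hM i
    _ = (M + (|C| + |C|)) * η := by ring
    _ < ε := hηε

end SetwiseContinuous

end SetwiseContinuity

section StrongFellerOperators

variable {X Y Z : Type*} [MeasurableSpace X] [MeasurableSpace Y] [MeasurableSpace Z]

theorem abs_integral_kernel_le (k : Kernel Y X) [IsFiniteKernel k] {f : X → ℝ} {C : ℝ}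
    (hC : 0 ≤ C) (hfC : ∀ x, |f x| ≤ C) (y : Y) :
    |∫ x, f x ∂k y| ≤ C * k.bound.toReal :=
  calc ‖∫ x, f x ∂k y‖
      ≤ C * (k y).real Set.univ := norm_integral_le_of_norm_le_const (.of_forall hfC)
    _ ≤ C * k.bound.toReal := mul_le_mul_of_nonneg_left
        (ENNReal.toReal_mono k.bound_ne_top (k.measure_le_bound y _)) hC

theorem IsBb.integral_kernel {f : X → ℝ} (hf : IsBb f) (k : Kernel Y X) [IsFiniteKernel k] :
    IsBb fun y => ∫ x, f x ∂k y := by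
  obtain ⟨hf_meas, C, hfC⟩ := hf
  exact ⟨hf_meas.stronglyMeasurable.integral_kernel.measurable, |C| * k.bound.toReal,
    abs_integral_kernel_le k (abs_nonneg C) fun x => (hfC x).trans (le_abs_self C)⟩

/-- `T` is a positive strong Feller kernel operator from `B_b(X)` to `B_b(Y)`, the extension of the
notion to two different spaces: for `X = Y` the field `exists_kernel` is `IsKernelOperator T`. -/
structure IsStrongFellerOperator [TopologicalSpace Y] (T : (X → ℝ) → Y → ℝ) : Prop where
  exists_kernel : ∃ k : Kernel Y X, IsFiniteKernel k ∧ ∀ f, IsBb f → ∀ y, T f y = ∫ x, f x ∂k y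
  continuous : ∀ f, IsBb f → Continuous (T f)

theorem IsStrongFellerOperator.exists_setwiseContinuous_kernel [TopologicalSpace Y]
    {T : (X → ℝ) → Y → ℝ} (hT : IsStrongFellerOperator T) :
    ∃ k : Kernel Y X, IsFiniteKernel k ∧ SetwiseContinuous k ∧
      ∀ f, IsBb f → T f = fun y => ∫ x, f x ∂k y := by
  obtain ⟨k, hk, hTk⟩ := hT.exists_kernel
  exact ⟨k, hk, .of_continuous_integral fun f hf => (hT.continuous f hf).congr (hTk f hf),
    fun f hf => funext (hTk f hf)⟩

theorem product_strong_feller_compact_general [TopologicalSpace Y]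
    [TopologicalSpace.SeparableSpace Y] [TopologicalSpace Z] [CompactSpace Z]
    {S : (Y → ℝ) → Z → ℝ} {T : (X → ℝ) → Y → ℝ}
    (hS : IsStrongFellerOperator S) (hT : IsStrongFellerOperator T) :
    IsCompact (closure {g : C(Z, ℝ) |
      ∃ f : X → ℝ, IsBb f ∧ (∀ x, |f x| ≤ 1) ∧ ∀ z, g z = S (T f) z}) := by
  obtain ⟨s, _, hs, hSs⟩ := hS.exists_setwiseContinuous_kernel
  obtain ⟨t, _, ht, hTt⟩ := hT.exists_setwiseContinuous_kernel
  have hST f (hf : IsBb f) : S (T f) = fun z => ∫ y, ∫ x, f x ∂t y ∂s z := by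
    rw [hTt f hf, hSs _ (hf.integral_kernel t)]
  refine isCompact_closure_of_forall_exists_subseq_tendsto fun u hu => ?_
  choose f hf hf1 huf using hu
  have hu_eq n : ⇑(u n) = fun z => ∫ y, ∫ x, f n x ∂t y ∂s z :=
    (funext (huf n)).trans (hST (f n) (hf n))
  obtain ⟨φ, hφ, G, hG⟩ := ht.exists_subseq_tendsto_integral (fun n => (hf n).1) hf1
  have hunif : TendstoUniformly (fun n => ⇑(u (φ n))) (fun z => ∫ y, G y ∂s z) atTop := by
    simp only [hu_eq]
    exact hs.tendstoUniformly_integral (fun n => ((hf (φ n)).integral_kernel t).1)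
      (fun n => abs_integral_kernel_le t zero_le_one (hf1 (φ n))) hG
  have hlim : Continuous fun z => ∫ y, G y ∂s z :=
    hunif.continuous (.of_forall fun n => (u (φ n)).continuous)
  exact ⟨⟨_, hlim⟩, φ, hφ, ContinuousMap.tendsto_iff_tendstoUniformly.2 hunif⟩

end StrongFellerOperators

/-- the product of two positive strong Feller kernel operators on `B_b(K)` is
compact: the image of the unit ball of `B_b(K)` under `S ∘ T` is relatively compact in
`C(K)` with the supremum norm. -/
theorem product_strong_feller_compact
    (S T : (K → ℝ) → K → ℝ)
    (hS : IsKernelOperator S) (hT : IsKernelOperator T)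
    (hSF : ∀ f : K → ℝ, IsBb f → Continuous (S f))
    (hTF : ∀ f : K → ℝ, IsBb f → Continuous (T f)) :
    IsCompact (closure {g : C(K, ℝ) |
      ∃ f : K → ℝ, IsBb f ∧ (∀ x, |f x| ≤ 1) ∧ ∀ x, g x = S (T f) x}) :=
  product_strong_feller_compact_general ⟨hS, hSF⟩ ⟨hT, hTF⟩
end
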